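/- For every t > 0 and every a > 0, (1/2)·e^{-2/a} · E[ M_t · (a/2 + A_t/2)^{-2} · exp( M_t / (a/2 + A_t/2) ) ] = (2/a²)·P[ A_t^{(1)} ≤ a ]. -/

import Mathlib

open MeasureTheory ProbabilityTheory Real Set

noncomputable section

/-- A standard one-dimensional Brownian motion `B` (with `B 0 = 0`, continuous
paths, Gaussian increments and independent increments) on a probability space
with measure `P`. -/
structure IsBrownianMotion {Ω : Type*} [MeasurableSpace Ω]
    (P : Measure Ω) (B : ℝ → Ω → ℝ) : Prop where
  isProbabilityMeasure : IsProbabilityMeasure P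
  measurable : ∀ t : ℝ, Measurable (B t)
  start : ∀ ω, B 0 ω = 0
  continuous_paths : ∀ ω, Continuous fun t => B t ω
  gaussian_increments : ∀ s t : ℝ, 0 ≤ s → s ≤ t →
    P.map (fun ω => B t ω - B s ω) = gaussianReal 0 (Real.toNNReal (t - s))
  indep_increments : ∀ t : ℕ → ℝ, Monotone t → 0 ≤ t 0 →
    iIndepFun
      (fun (i : ℕ) (ω : Ω) => B (t (i + 1)) ω - B (t i) ω) P

/-- The exponential martingale `M_t = exp (B_t - t/2)`. -/
def M {Ω : Type*} (B : ℝ → Ω → ℝ) (t : ℝ) (ω : Ω) : ℝ :=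
  Real.exp (B t ω - t / 2)

/-- The time integral `A_t = ∫_0^t exp (B_s - s/2) ds`. -/
def A {Ω : Type*} (B : ℝ → Ω → ℝ) (t : ℝ) (ω : Ω) : ℝ :=
  ∫ s in (0 : ℝ)..t, Real.exp (B s ω - s / 2)

/-- The time integral with drift `ν`: `A_t^{(ν)} = ∫_0^t exp (B_s + (ν - 1/2) s) ds`. -/
def Adrift {Ω : Type*} (B : ℝ → Ω → ℝ) (ν t : ℝ) (ω : Ω) : ℝ :=
  ∫ s in (0 : ℝ)..t, Real.exp (B s ω + (ν - 1 / 2) * s)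

variable {Ω : Type*} [MeasurableSpace Ω] (P : MeasureTheory.Measure Ω) (B : ℝ → Ω → ℝ)

/-!
Write `N = exp (B_t + t / 2)` and `U` for the integral of `exp (B_s + s / 2)` over `[0, t]`. In the
coordinates `(p, q) = (N / U ^ 2, 1 / U)`, the law of `(N, U)` weighted by
`q ^ 2 * exp (2 * p / q + 2 * q)` is invariant under the translations `q ↦ q + α`. Infinitesimally
this is an integration by parts: adding to the path a unit drift up to time `r` changes the measure
by the Cameron–Martin density `exp (B_r - r / 2)`, and the derivatives in `r` of the resulting
identities, integrated over `[0, t]`, combine into a pure `q`-derivative. Translating by `1 / a`,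
the integral over the half-plane `q > 1 / a` of the law of `(p, q)`, which is the probability of
`U < a`, becomes the expectation of the ratio of the weights at `(p, q)` and `(p, q + 1 / a)`. That
ratio is an explicit function of `(N, U)`, and Girsanov's theorem turns `(N, U)` into `(M_t, A_t)`
at the cost of the density `M_t`.
-/

open scoped NNReal ENNReal Topology

section WienerMeasure

/-- Continuous paths on the half-line, with the `σ`-algebra generated by the evaluations. -/
abbrev ContPath : Type := {w : ℝ≥0 → ℝ // Continuous w}

/-- The path `w` with the drift `c` added up to time `r`. The Cameron–Martin formula uses `c = 1`;
for `c = -w r / r` this is the bridge from `0` to `0` over `[0, r]`, followed by the increments of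
`w` after `r`. -/
def ramp (r : ℝ≥0) (c : ℝ) (w : ContPath) : ContPath :=
  ⟨fun s => w.1 s + c * min s r, by have := w.2; fun_prop⟩

/-- The coordinate process is a Brownian motion under `μ`. -/
structure IsWienerMeasure (μ : Measure ContPath) : Prop where
  isPreBrownianReal : IsPreBrownianReal (fun s w => w.1 s) μ

@[fun_prop]
lemma measurable_eval (s : ℝ≥0) : Measurable fun w : ContPath => w.1 s :=
  (measurable_pi_apply s).comp measurable_subtype_coe

lemma measurable_ramp (r : ℝ≥0) : Measurable fun x : ℝ × ContPath => ramp r x.1 x.2 := by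
  refine Measurable.subtype_mk (measurable_pi_lambda _ fun s => ?_)
  exact ((measurable_eval s).comp measurable_snd).add (measurable_fst.mul_const _)

lemma measurable_ramp_const (r : ℝ≥0) (c : ℝ) : Measurable (ramp r c) :=
  (measurable_ramp r).comp measurable_prodMk_left

lemma ramp_ramp (r : ℝ≥0) (c d : ℝ) (w : ContPath) : ramp r c (ramp r d w) = ramp r (c + d) w := by
  ext s
  simp only [ramp]
  ring

lemma ramp_add_div (r : ℝ≥0) (x : ℝ) (w : ContPath) :
    ramp r ((x + r) / r) w = ramp r 1 (ramp r (x / r) w) := by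
  rcases eq_or_ne r 0 with rfl | hr
  · ext s
    simp [ramp]
  · rw [ramp_ramp, add_div, div_self (NNReal.coe_ne_zero.2 hr), add_comm]

lemma gaussianReal_withDensity_exp (v : ℝ≥0) :
    (gaussianReal 0 v).withDensity (fun x => ENNReal.ofReal (exp (x - v / 2))) =
      (gaussianReal 0 v).map (· + (v : ℝ)) := by
  rcases eq_or_ne v 0 with rfl | hv
  · simp [gaussianReal_zero_var, dirac_withDensity]
  have hv' : (v : ℝ) ≠ 0 := NNReal.coe_ne_zero.2 hv
  rw [gaussianReal_map_add_const, gaussianReal_of_var_ne_zero _ hv,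
    gaussianReal_of_var_ne_zero _ hv, ← withDensity_mul _ (by fun_prop) (by fun_prop)]
  congr 1
  ext x
  rw [Pi.mul_apply, gaussianPDF, gaussianPDF, ← ENNReal.ofReal_mul (gaussianPDFReal_nonneg _ _ _),
    gaussianPDFReal, gaussianPDFReal, mul_assoc, ← exp_add]
  congr 3
  field_simp
  ring

variable {μ : Measure ContPath}

namespace IsWienerMeasure

lemma isProbabilityMeasure (hμ : IsWienerMeasure μ) : IsProbabilityMeasure μ :=
  hμ.isPreBrownianReal.isGaussianProcess.isProbabilityMeasure

lemma indepFun_bridge_eval (hμ : IsWienerMeasure μ) (r : ℝ≥0) :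
    IndepFun (fun w => ramp r (-w.1 r / r) w) (fun w => w.1 r) μ := by
  have hX := hμ.isPreBrownianReal
  have hmem (s : ℝ≥0) : MemLp (fun w : ContPath => w.1 s) 2 μ :=
    (hX.isGaussianProcess.hasGaussianLaw_eval s).memLp_two
  have hbridge (s : ℝ≥0) : (fun w : ContPath => (ramp r (-w.1 r / r) w).1 s) =
      fun w => w.1 s - (min s r / r : ℝ) * w.1 r := by
    ext w
    simp only [ramp]
    ring
  have hproc : IsGaussianProcess (Sum.elim (fun s (w : ContPath) => (ramp r (-w.1 r / r) w).1 s)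
      fun (_ : Unit) (w : ContPath) => w.1 r) μ := by
    refine hX.isGaussianProcess.of_isGaussianProcess ?_
    rintro (s | u)
    · refine ⟨{s, r}, .proj ⟨s, by simp⟩ - (min s r / r : ℝ) • .proj ⟨r, by simp⟩, fun w => ?_⟩
      simpa using congrFun (hbridge s) w
    · exact ⟨{r}, .proj ⟨r, by simp⟩, fun w => rfl⟩
  have hcov (s : ℝ≥0) : cov[fun w : ContPath => (ramp r (-w.1 r / r) w).1 s, fun w => w.1 r; μ]
      = 0 := by
    have := hμ.isProbabilityMeasure
    rw [hbridge, covariance_fun_sub_left (hmem s) ((hmem r).const_mul _) (hmem r),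
      covariance_const_mul_left, hX.covariance_fun_eval, hX.covariance_fun_eval, min_self]
    rcases eq_or_ne r 0 with rfl | hr
    · simp
    · rw [NNReal.coe_min, div_mul_cancel₀ _ (NNReal.coe_ne_zero.2 hr), sub_self]
  have hindep := hproc.indepFun_of_covariance_eq_zero
    (fun s => by rw [hbridge]; fun_prop) (fun _ => (measurable_eval r).aemeasurable)
    fun s _ => hcov s
  have hindep' := (IndepFun_iff_Indep _ _ _).1 (hindep.comp measurable_id (measurable_pi_apply ()))
  rw [IndepFun_iff_Indep]
  convert hindep' using 1
  · exact MeasurableSpace.comap_comp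
  · rfl

lemma lintegral_eval_self (hμ : IsWienerMeasure μ) (r : ℝ≥0) {F : ℝ × ContPath → ℝ≥0∞}
    (hF : Measurable F) :
    ∫⁻ w, F (w.1 r, w) ∂μ =
      ∫⁻ z, ∫⁻ x, F (x, ramp r (x / r) z) ∂gaussianReal 0 r
        ∂μ.map (fun w => ramp r (-w.1 r / r) w) := by
  have := hμ.isProbabilityMeasure
  have hbridge : Measurable fun w : ContPath => ramp r (-w.1 r / r) w :=
    (measurable_ramp r).comp (((measurable_eval r).neg.div_const _).prodMk measurable_id)
  have hjoint : Measurable fun x : ContPath × ℝ => F (x.2, ramp r (x.2 / r) x.1) :=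
    hF.comp (measurable_snd.prodMk
      ((measurable_ramp r).comp ((measurable_snd.div_const _).prodMk measurable_fst)))
  rw [lintegral_lintegral hjoint.aemeasurable, ← (hμ.isPreBrownianReal.hasLaw_eval r).map_eq,
    ← (indepFun_iff_map_prod_eq_prod_map_map hbridge.aemeasurable
      (measurable_eval r).aemeasurable).1 (hμ.indepFun_bridge_eval r),
    lintegral_map hjoint (hbridge.prodMk (measurable_eval r))]
  refine lintegral_congr fun w => ?_
  congr
  ext s
  simp only [ramp]
  ring

theorem withDensity_exp_eq_map_ramp (hμ : IsWienerMeasure μ) (r : ℝ≥0) :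
    μ.withDensity (fun w => ENNReal.ofReal (exp (w.1 r - r / 2))) = μ.map (ramp r 1) := by
  have hramp := measurable_ramp_const r 1
  have htilt : Measurable fun x : ℝ => ENNReal.ofReal (exp (x - r / 2)) := by fun_prop
  have hdensity : Measurable fun w : ContPath => ENNReal.ofReal (exp (w.1 r - r / 2)) :=
    htilt.comp (measurable_eval r)
  refine Measure.ext_of_lintegral _ fun G hG => ?_
  have hsection (z : ContPath) : Measurable fun x : ℝ => G (ramp r (x / r) z) :=
    hG.comp ((measurable_ramp r).comp ((measurable_id.div_const _).prodMk measurable_const))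
  rw [lintegral_withDensity_eq_lintegral_mul _ hdensity hG,
    lintegral_map hG hramp]
  calc ∫⁻ w, ENNReal.ofReal (exp (w.1 r - r / 2)) * G w ∂μ
      = ∫⁻ z, ∫⁻ x, ENNReal.ofReal (exp (x - r / 2)) * G (ramp r (x / r) z) ∂gaussianReal 0 r
          ∂μ.map (fun w => ramp r (-w.1 r / r) w) :=
        hμ.lintegral_eval_self r ((htilt.comp measurable_fst).mul (hG.comp measurable_snd))
    _ = ∫⁻ z, ∫⁻ x, G (ramp r 1 (ramp r (x / r) z)) ∂gaussianReal 0 r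
          ∂μ.map (fun w => ramp r (-w.1 r / r) w) := by
        refine lintegral_congr fun z => ?_
        have := lintegral_withDensity_eq_lintegral_mul (gaussianReal 0 r) htilt (hsection z)
        rw [gaussianReal_withDensity_exp, lintegral_map (hsection z) (by fun_prop)] at this
        simpa only [ramp_add_div, Pi.mul_apply] using this.symm
    _ = ∫⁻ w, G (ramp r 1 w) ∂μ :=
        (hμ.lintegral_eval_self r ((hG.comp hramp).comp measurable_snd)).symm

theorem integral_exp_mul (hμ : IsWienerMeasure μ) (r : ℝ≥0) (G : ContPath → ℝ)
    (hG : Measurable G) :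
    ∫ w, exp (w.1 r - r / 2) * G w ∂μ = ∫ w, G (ramp r 1 w) ∂μ := by
  rw [← integral_map (measurable_ramp_const r 1).aemeasurable
      hG.aestronglyMeasurable, ← hμ.withDensity_exp_eq_map_ramp,
    integral_withDensity_eq_integral_toReal_smul (by fun_prop) (by simp)]
  simp [(exp_pos _).le]

end IsWienerMeasure

end WienerMeasure

section StretchedIntegral

/-- The integral `∫ s in 0..t, exp (min s r) * g s`, split at `r` so that it is differentiable in
`r ∈ ℝ`. -/
def stretchedIntegral (g : ℝ → ℝ) (t r : ℝ) : ℝ :=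
  (∫ s in (0 : ℝ)..r, exp s * g s) + exp r * ∫ s in r..t, g s

variable {g : ℝ → ℝ} {t r : ℝ}

lemma stretchedIntegral_eq_integral_exp_min (hg : Continuous g) (hr : r ∈ Icc 0 t) :
    stretchedIntegral g t r = ∫ s in (0 : ℝ)..t, exp (min s r) * g s := by
  have hcont : Continuous fun s => exp (min s r) * g s := by fun_prop
  rw [stretchedIntegral, ← intervalIntegral.integral_const_mul,
    ← intervalIntegral.integral_add_adjacent_intervals (hcont.intervalIntegrable 0 r)
      (hcont.intervalIntegrable r t)]
  congr 1 <;> refine intervalIntegral.integral_congr fun s hs => ?_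
  · rw [uIcc_of_le hr.1] at hs
    simp only [min_eq_left hs.2]
  · rw [uIcc_of_le hr.2] at hs
    simp only [min_eq_right hs.1]

lemma hasDerivAt_integral_left (hg : Continuous g) (t r : ℝ) :
    HasDerivAt (fun r => ∫ s in r..t, g s) (-g r) r :=
  intervalIntegral.integral_hasDerivAt_left (hg.intervalIntegrable r t)
    (hg.stronglyMeasurableAtFilter _ _) hg.continuousAt

lemma integral_mul_integral_right (hg : Continuous g) (t : ℝ) :
    ∫ r in (0 : ℝ)..t, g r * ∫ s in r..t, g s = (∫ s in (0 : ℝ)..t, g s) ^ 2 / 2 := by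
  have hderiv (r : ℝ) := ((hasDerivAt_integral_left hg t r).fun_pow 2).neg.div_const 2
  have htail : Continuous fun r => ∫ s in r..t, g s :=
    continuous_iff_continuousAt.2 fun r => (hasDerivAt_integral_left hg t r).continuousAt
  have hint := intervalIntegral.integral_eq_sub_of_hasDerivAt (a := 0) (b := t)
    (fun r _ => hderiv r) (Continuous.intervalIntegrable (by fun_prop) _ _)
  simp only [Pi.neg_apply, intervalIntegral.integral_same] at hint
  convert hint using 1
  · exact intervalIntegral.integral_congr fun r _ => by push_cast; ring
  · ring

lemma hasDerivAt_stretchedIntegral (hg : Continuous g) (t r : ℝ) :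
    HasDerivAt (stretchedIntegral g t) (exp r * ∫ s in r..t, g s) r := by
  have hhead : HasDerivAt (fun r => ∫ s in (0 : ℝ)..r, exp s * g s) (exp r * g r) r :=
    (continuous_exp.mul hg).integral_hasStrictDerivAt 0 r |>.hasDerivAt
  have htail := (Real.hasDerivAt_exp r).fun_mul (hasDerivAt_integral_left hg t r)
  exact (hhead.fun_add htail).congr_deriv (by ring)

lemma stretchedIntegral_pos (hg : Continuous g) (hpos : ∀ s, 0 < g s) (ht : 0 < t)
    (hr : r ∈ Icc 0 t) : 0 < stretchedIntegral g t r := by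
  rw [stretchedIntegral_eq_integral_exp_min hg hr]
  exact intervalIntegral.intervalIntegral_pos_of_pos
    (Continuous.intervalIntegrable (by fun_prop) _ _) (fun s => mul_pos (exp_pos _) (hpos s)) ht

/-- The coordinates `(x / v ^ 2, 1 / v)`; those of geometric Brownian motion and its time integral
have, up to a weight, a law invariant under translations of the second coordinate. -/
def invSqCoords (x v : ℝ) : ℝ × ℝ := (x / v ^ 2, v⁻¹)

/-- The derivative of `r ↦ exp r * H` along a curve with velocity `((1 - 2 ρ) p, -ρ q)` at
`(p, q)`. -/
def flowDeriv (H : ℝ × ℝ → ℝ) (ρ : ℝ) (x : ℝ × ℝ) : ℝ :=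
  H x + fderiv ℝ H x ((1 - 2 * ρ) * x.1, -ρ * x.2)

lemma hasDerivAt_invSqCoords_stretchedIntegral (hg : Continuous g) (x : ℝ)
    (hV : stretchedIntegral g t r ≠ 0) :
    HasDerivAt (fun r => invSqCoords (exp r * x) (stretchedIntegral g t r))
      ((1 - 2 * (exp r * (∫ s in r..t, g s) / stretchedIntegral g t r)) *
        (invSqCoords (exp r * x) (stretchedIntegral g t r)).1,
        -(exp r * (∫ s in r..t, g s) / stretchedIntegral g t r) *
        (invSqCoords (exp r * x) (stretchedIntegral g t r)).2) r := by
  have hderiv := hasDerivAt_stretchedIntegral hg t r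
  have hfst := ((Real.hasDerivAt_exp r).mul_const x).fun_div (hderiv.fun_pow 2) (pow_ne_zero 2 hV)
  refine (hfst.prodMk (hderiv.fun_inv hV)).congr_deriv ?_
  ext
  · simp only [invSqCoords]
    push_cast
    field_simp
  · simp only [invSqCoords]
    field_simp

lemma exp_mul_sub_eq_integral_flowDeriv (hg : Continuous g) (hpos : ∀ s, 0 < g s) (ht : 0 < t)
    (x : ℝ) {H : ℝ × ℝ → ℝ} (hH : ContDiff ℝ 1 H) :
    exp t * H (invSqCoords (exp t * x) (stretchedIntegral g t t)) -
        H (invSqCoords x (stretchedIntegral g t 0)) =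
      ∫ r in (0 : ℝ)..t, exp r * flowDeriv H (exp r * (∫ s in r..t, g s) / stretchedIntegral g t r)
        (invSqCoords (exp r * x) (stretchedIntegral g t r)) := by
  have hV (r) (hr : r ∈ Icc 0 t) := (stretchedIntegral_pos hg hpos ht hr).ne'
  have hcont : ContinuousOn (stretchedIntegral g t) (Icc 0 t) := fun r _ =>
    (hasDerivAt_stretchedIntegral hg t r).continuousAt.continuousWithinAt
  have htail : Continuous fun r => ∫ s in r..t, g s :=
    continuous_iff_continuousAt.2 fun r => (hasDerivAt_integral_left hg t r).continuousAt
  have hcurve : ContinuousOn (fun r => invSqCoords (exp r * x) (stretchedIntegral g t r))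
      (Icc 0 t) := fun r hr =>
    (hasDerivAt_invSqCoords_stretchedIntegral hg x (hV r hr)).continuousAt.continuousWithinAt
  have hρ : ContinuousOn (fun r => exp r * (∫ s in r..t, g s) / stretchedIntegral g t r)
      (Icc 0 t) := (by fun_prop : Continuous _).continuousOn.div hcont hV
  have hderiv (r) (hr : r ∈ uIcc 0 t) :=
    (Real.hasDerivAt_exp r).fun_mul ((hH.differentiable one_ne_zero _).hasFDerivAt.comp_hasDerivAt r
      (hasDerivAt_invSqCoords_stretchedIntegral hg x (hV r (by rwa [uIcc_of_le ht.le] at hr))))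
  rw [eq_comm]
  convert intervalIntegral.integral_eq_sub_of_hasDerivAt hderiv ?_ using 1
  · simp only [flowDeriv, mul_add, Function.comp_apply]
  · simp
  · refine ContinuousOn.intervalIntegrable ?_
    rw [uIcc_of_le ht.le]
    refine (continuous_exp.continuousOn.mul (hH.continuous.comp_continuousOn hcurve)).add
      (continuous_exp.continuousOn.mul
        (((hH.continuous_fderiv one_ne_zero).comp_continuousOn hcurve).clm_apply ?_))
    exact (((continuousOn_const.sub (continuousOn_const.mul hρ)).mul hcurve.fst)).prodMk
      (hρ.neg.mul hcurve.snd)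

end StretchedIntegral

section GeometricBrownianMotion

/-- Geometric Brownian motion `exp (w s + s / 2)` along the path `w`, at real times `s ≥ 0`. -/
def gbm (s : ℝ) (w : ContPath) : ℝ := exp (w.1 s.toNNReal + s / 2)

/-- The time integral of `gbm` over `[0, t]`. -/
def gbmIntegral (t : ℝ) (w : ContPath) : ℝ := ∫ s in (0 : ℝ)..t, gbm s w

/-- The pair `(gbm, gbmIntegral)` at time `t` in the coordinates `invSqCoords`. -/
def gbmCoords (t : ℝ) (w : ContPath) : ℝ × ℝ := invSqCoords (gbm t w) (gbmIntegral t w)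

lemma gbm_pos (s : ℝ) (w : ContPath) : 0 < gbm s w := exp_pos _

lemma continuous_gbm (w : ContPath) : Continuous fun s => gbm s w := by
  have := w.2
  unfold gbm
  fun_prop

lemma measurable_gbm : Measurable fun x : ℝ × ContPath => gbm x.1 x.2 :=
  measurable_uncurry_of_continuous_of_measurable (u := gbm) continuous_gbm fun s => by
    unfold gbm
    fun_prop

lemma continuous_gbmIntegral (w : ContPath) : Continuous fun t => gbmIntegral t w :=
  intervalIntegral.continuous_primitive (fun a b => (continuous_gbm w).intervalIntegrable a b) 0

lemma measurable_gbmIntegral : Measurable fun x : ℝ × ContPath => gbmIntegral x.1 x.2 := by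
  refine measurable_uncurry_of_continuous_of_measurable (u := gbmIntegral) continuous_gbmIntegral
    fun t => ?_
  have hgbm : StronglyMeasurable fun x : ContPath × ℝ => gbm x.2 x.1 :=
    (measurable_gbm.comp measurable_swap).stronglyMeasurable
  exact hgbm.integral_prod_right.measurable.sub hgbm.integral_prod_right.measurable

lemma gbmIntegral_pos {t : ℝ} (ht : 0 < t) (w : ContPath) : 0 < gbmIntegral t w :=
  intervalIntegral.intervalIntegral_pos_of_pos ((continuous_gbm w).intervalIntegrable _ _)
    (fun s => gbm_pos s w) ht

lemma integral_gbm_eq_sub (r t : ℝ) (w : ContPath) :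
    ∫ s in r..t, gbm s w = gbmIntegral t w - gbmIntegral r w :=
  (intervalIntegral.integral_interval_sub_left ((continuous_gbm w).intervalIntegrable _ _)
    ((continuous_gbm w).intervalIntegrable _ _)).symm

lemma gbm_ramp {r : ℝ≥0} {s : ℝ} (hs : 0 ≤ s) (w : ContPath) :
    gbm s (ramp r 1 w) = exp (min s r) * gbm s w := by
  simp only [gbm, ramp, one_mul, ← exp_add, NNReal.coe_min, coe_toNNReal s hs]
  ring_nf

lemma integral_gbm_ramp {r t : ℝ≥0} (hr : r ≤ t) (w : ContPath) :
    ∫ s in (r : ℝ)..t, gbm s (ramp r 1 w) = exp r * ∫ s in (r : ℝ)..t, gbm s w := by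
  rw [← intervalIntegral.integral_const_mul]
  refine intervalIntegral.integral_congr fun s hs => ?_
  rw [uIcc_of_le (NNReal.coe_le_coe.2 hr)] at hs
  simp only [gbm_ramp (r.coe_nonneg.trans hs.1), min_eq_right hs.1]

lemma gbmIntegral_ramp {r t : ℝ≥0} (hr : r ≤ t) (w : ContPath) :
    gbmIntegral t (ramp r 1 w) = stretchedIntegral (fun s => gbm s w) t r := by
  rw [stretchedIntegral_eq_integral_exp_min (continuous_gbm w)
    ⟨r.coe_nonneg, NNReal.coe_le_coe.2 hr⟩]
  refine intervalIntegral.integral_congr fun s hs => ?_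
  rw [uIcc_of_le t.coe_nonneg] at hs
  simp only [gbm_ramp hs.1]

lemma gbmCoords_ramp {r t : ℝ≥0} (hr : r ≤ t) (w : ContPath) :
    gbmCoords t (ramp r 1 w) =
      invSqCoords (exp r * gbm t w) (stretchedIntegral (fun s => gbm s w) t r) := by
  rw [gbmCoords, gbm_ramp t.coe_nonneg, gbmIntegral_ramp hr, min_eq_right (NNReal.coe_le_coe.2 hr)]

/-- The share of `gbmIntegral t` accumulated after time `r`. -/
def tailShare (t r : ℝ) (w : ContPath) : ℝ := (∫ s in r..t, gbm s w) / gbmIntegral t w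

lemma tailShare_mem_Icc {t r : ℝ} (hr : r ∈ Icc 0 t) (ht : 0 < t) (w : ContPath) :
    tailShare t r w ∈ Icc 0 1 := by
  have hhead : 0 ≤ gbmIntegral r w :=
    intervalIntegral.integral_nonneg hr.1 fun s _ => (gbm_pos s w).le
  have htail : 0 ≤ ∫ s in r..t, gbm s w :=
    intervalIntegral.integral_nonneg hr.2 fun s _ => (gbm_pos s w).le
  have hU := (gbmIntegral_pos ht w).le
  refine ⟨div_nonneg htail hU, div_le_one_of_le₀ ?_ hU⟩
  rw [integral_gbm_eq_sub]
  linarith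

lemma measurable_tailShare (t : ℝ) : Measurable fun x : ℝ × ContPath => tailShare t x.1 x.2 := by
  have htotal : Measurable fun x : ℝ × ContPath => gbmIntegral t x.2 :=
    measurable_gbmIntegral.comp (measurable_const.prodMk measurable_snd)
  simp only [tailShare, integral_gbm_eq_sub]
  exact (htotal.sub measurable_gbmIntegral).div htotal

lemma measurable_gbmCoords (t : ℝ) : Measurable (gbmCoords t) := by
  have hg : Measurable fun w => gbm t w := measurable_gbm.comp measurable_prodMk_left
  have hU : Measurable fun w => gbmIntegral t w :=
    measurable_gbmIntegral.comp measurable_prodMk_left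
  exact (hg.div (hU.pow_const 2)).prodMk hU.inv

lemma exp_mul_gbmCoords_ramp_sub {t : ℝ≥0} (ht : 0 < t) {H : ℝ × ℝ → ℝ} (hH : ContDiff ℝ 1 H)
    (w : ContPath) :
    exp t * H (gbmCoords t (ramp t 1 w)) - H (gbmCoords t w) =
      ∫ r in (0 : ℝ)..t, exp r * flowDeriv H (tailShare t r (ramp r.toNNReal 1 w))
        (gbmCoords t (ramp r.toNNReal 1 w)) := by
  have h := exp_mul_sub_eq_integral_flowDeriv (continuous_gbm w) (fun s => gbm_pos s w)
    (NNReal.coe_pos.2 ht) (gbm t w) hH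
  have h0 : stretchedIntegral (fun s => gbm s w) t 0 = gbmIntegral t w := by
    simp [stretchedIntegral, gbmIntegral]
  rw [h0] at h
  rw [gbmCoords_ramp le_rfl, gbmCoords, h]
  refine intervalIntegral.integral_congr fun r hr => ?_
  rw [uIcc_of_le t.coe_nonneg] at hr
  lift r to ℝ≥0 using hr.1
  have hrt : r ≤ t := hr.2
  simp only [toNNReal_coe, tailShare, gbmCoords_ramp hrt, integral_gbm_ramp hrt,
    gbmIntegral_ramp hrt]

lemma integral_gbm_mul_flowDeriv {t : ℝ} (ht : 0 < t) (H : ℝ × ℝ → ℝ) (w : ContPath) :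
    ∫ r in (0 : ℝ)..t, gbm r w * flowDeriv H (tailShare t r w) (gbmCoords t w) =
      gbmIntegral t w * H (gbmCoords t w) - 1 / 2 * fderiv ℝ H (gbmCoords t w) (0, 1) := by
  set x := gbmCoords t w
  have hU := (gbmIntegral_pos ht w).ne'
  have hgbm : IntervalIntegrable (fun r => gbm r w) volume 0 t :=
    (continuous_gbm w).intervalIntegrable _ _
  have hshare : IntervalIntegrable (fun r => gbm r w * tailShare t r w) volume 0 t := by
    simp only [tailShare, integral_gbm_eq_sub]
    exact ((continuous_gbm w).mul
      ((continuous_const.sub (continuous_gbmIntegral w)).div_const _)).intervalIntegrable _ _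
  have hshare_eq : ∫ r in (0 : ℝ)..t, gbm r w * tailShare t r w = gbmIntegral t w / 2 := by
    simp only [tailShare, mul_div_assoc', intervalIntegral.integral_div,
      integral_mul_integral_right (continuous_gbm w)]
    rw [← gbmIntegral]
    field_simp
  have hsplit (r : ℝ) : gbm r w * flowDeriv H (tailShare t r w) x =
      gbm r w * (H x + x.1 * fderiv ℝ H x (1, 0)) - gbm r w * tailShare t r w *
        (2 * x.1 * fderiv ℝ H x (1, 0) + x.2 * fderiv ℝ H x (0, 1)) := by
    have hvec (a b : ℝ) : ((a, b) : ℝ × ℝ) = a • (1, 0) + b • (0, 1) := by simp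
    rw [flowDeriv, hvec, map_add, map_smul, map_smul, smul_eq_mul, smul_eq_mul]
    ring
  have hUx : gbmIntegral t w * x.2 = 1 := mul_inv_cancel₀ hU
  simp only [hsplit]
  rw [intervalIntegral.integral_sub (hgbm.mul_const _) (hshare.mul_const _),
    intervalIntegral.integral_mul_const, intervalIntegral.integral_mul_const, hshare_eq,
    ← gbmIntegral]
  linear_combination (-(1 / 2) * fderiv ℝ H x (0, 1)) * hUx

end GeometricBrownianMotion

section IntegrationByParts

lemma continuous_flowDeriv {H : ℝ × ℝ → ℝ} (hH : ContDiff ℝ 1 H) :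
    Continuous fun x : ℝ × ℝ × ℝ => flowDeriv H x.1 x.2 :=
  (hH.continuous.comp continuous_snd).add
    (((hH.continuous_fderiv one_ne_zero).comp continuous_snd).clm_apply (by fun_prop))

lemma exists_bound_norm_mul_norm_fderiv {E F : Type*} [NormedAddCommGroup E] [NormedSpace ℝ E]
    [NormedAddCommGroup F] [NormedSpace ℝ F] {H : E → F} (hH : ContDiff ℝ 1 H)
    (hcpt : HasCompactSupport H) : ∃ C, ∀ x, ‖x‖ * ‖fderiv ℝ H x‖ ≤ C := by
  have hmul : HasCompactSupport fun x => ‖x‖ * ‖fderiv ℝ H x‖ := (hcpt.fderiv ℝ).norm.mul_left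
  obtain ⟨C, hC⟩ := hmul.exists_bound_of_continuous
    (continuous_norm.mul (hH.continuous_fderiv one_ne_zero).norm)
  exact ⟨C, fun x => (le_norm_self _).trans (hC x)⟩

lemma exists_bound_flowDeriv {H : ℝ × ℝ → ℝ} (hH : ContDiff ℝ 1 H) (hcpt : HasCompactSupport H) :
    ∃ C, ∀ ρ ∈ Icc (0 : ℝ) 1, ∀ x, ‖flowDeriv H ρ x‖ ≤ C := by
  obtain ⟨C, hC⟩ := hcpt.exists_bound_of_continuous hH.continuous
  obtain ⟨C', hC'⟩ := exists_bound_norm_mul_norm_fderiv hH hcpt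
  refine ⟨C + C', fun ρ hρ x => (norm_add_le _ _).trans (add_le_add (hC x) ?_)⟩
  have hvec : ‖((1 - 2 * ρ) * x.1, -ρ * x.2)‖ ≤ ‖x‖ := by
    rw [Prod.norm_mk, Prod.norm_def, norm_mul, norm_mul]
    refine max_le_max (mul_le_of_le_one_left (norm_nonneg _) ?_)
      (mul_le_of_le_one_left (norm_nonneg _) ?_) <;> rw [norm_eq_abs, abs_le] <;>
      constructor <;> linarith [hρ.1, hρ.2]
  calc ‖fderiv ℝ H x ((1 - 2 * ρ) * x.1, -ρ * x.2)‖
      ≤ ‖fderiv ℝ H x‖ * ‖x‖ := (fderiv ℝ H x).le_opNorm_of_le hvec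
    _ = ‖x‖ * ‖fderiv ℝ H x‖ := mul_comm _ _
    _ ≤ C' := hC' x

lemma ae_restrict_prod_fst_mem {E F : Type*} [MeasurableSpace E] [MeasurableSpace F]
    {ν : Measure E} (μ : Measure F) {s : Set E} (hs : MeasurableSet s) :
    ∀ᵐ x ∂(ν.restrict s).prod μ, x.1 ∈ s :=
  Measure.quasiMeasurePreserving_fst.ae (ae_restrict_mem hs)

variable {μ : Measure ContPath}

lemma integrable_mul_comp_gbmCoords (t : ℝ) {Y : ContPath → ℝ} (hY : Integrable Y μ)
    {F : ℝ × ℝ → ℝ} (hF : Continuous F) (hcpt : HasCompactSupport F) :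
    Integrable (fun w => Y w * F (gbmCoords t w)) μ := by
  obtain ⟨C, hC⟩ := hcpt.exists_bound_of_continuous hF
  exact hY.mul_bdd (hF.measurable.comp (measurable_gbmCoords t)).aestronglyMeasurable
    (.of_forall fun w => hC _)

namespace IsWienerMeasure

lemma integral_gbm (hμ : IsWienerMeasure μ) (r : ℝ≥0) : ∫ w, gbm r w ∂μ = exp r := by
  have := hμ.isProbabilityMeasure
  have hmass := hμ.integral_exp_mul r (fun _ => exp r) measurable_const
  simp only [← exp_add, integral_const, probReal_univ, one_smul] at hmass
  rw [← hmass]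
  congr with w
  rw [gbm, toNNReal_coe]
  ring_nf

lemma integrable_gbm (hμ : IsWienerMeasure μ) (r : ℝ≥0) : Integrable (fun w => gbm r w) μ := by
  by_contra h
  exact (exp_pos r).ne ((integral_undef h).symm.trans (hμ.integral_gbm r))

lemma integrable_gbm_prod (hμ : IsWienerMeasure μ) (t : ℝ≥0) :
    Integrable (fun x : ℝ × ContPath => gbm x.1 x.2)
      ((volume.restrict (uIoc (0 : ℝ) t)).prod μ) := by
  have := hμ.isProbabilityMeasure
  have hnonneg {r : ℝ} (hr : r ∈ uIoc (0 : ℝ) t) : 0 ≤ r :=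
    (uIoc_of_le t.coe_nonneg ▸ hr).1.le
  rw [integrable_prod_iff measurable_gbm.aestronglyMeasurable]
  constructor
  · exact ae_restrict_of_forall_mem measurableSet_uIoc fun r hr =>
      hμ.integrable_gbm ⟨r, hnonneg hr⟩
  · have hexp : IntegrableOn exp (uIoc (0 : ℝ) t) :=
      intervalIntegrable_iff.1 (continuous_exp.intervalIntegrable 0 t)
    refine hexp.congr_fun (fun r hr => ?_) measurableSet_uIoc
    simp only [norm_of_nonneg (gbm_pos _ _).le]
    exact (hμ.integral_gbm ⟨r, hnonneg hr⟩).symm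

lemma integrable_gbmIntegral (hμ : IsWienerMeasure μ) (t : ℝ≥0) :
    Integrable (fun w => gbmIntegral t w) μ := by
  have := hμ.isProbabilityMeasure
  simpa only [gbmIntegral, intervalIntegral.integral_of_le t.coe_nonneg,
    uIoc_of_le t.coe_nonneg] using (hμ.integrable_gbm_prod t).integral_prod_right

lemma exp_mul_integral_ramp (hμ : IsWienerMeasure μ) (r : ℝ≥0) {F : ContPath → ℝ}
    (hF : Measurable F) :
    exp r * ∫ w, F (ramp r 1 w) ∂μ = ∫ w, gbm r w * F w ∂μ := by
  rw [← hμ.integral_exp_mul r F hF, ← integral_const_mul]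
  congr with w
  rw [gbm, toNNReal_coe, ← mul_assoc, ← exp_add]
  ring_nf

lemma integral_exp_mul_ramp (hμ : IsWienerMeasure μ) (t : ℝ≥0) {Φ : ℝ × ContPath → ℝ}
    (hΦ : Measurable Φ) {C : ℝ} (hC : ∀ r ∈ Icc (0 : ℝ) t, ∀ w, ‖Φ (r, w)‖ ≤ C) :
    ∫ w, (∫ r in (0 : ℝ)..t, exp r * Φ (r, ramp r.toNNReal 1 w)) ∂μ =
      ∫ w, (∫ r in (0 : ℝ)..t, gbm r w * Φ (r, w)) ∂μ := by
  have := hμ.isProbabilityMeasure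
  have hramp : Measurable fun x : ℝ × ContPath => ramp x.1.toNNReal 1 x.2 := by
    refine Measurable.subtype_mk (measurable_pi_lambda _ fun s => ?_)
    exact ((measurable_eval s).comp measurable_snd).add (by fun_prop)
  have hmem : ∀ᵐ x ∂(volume.restrict (uIoc (0 : ℝ) t)).prod μ, x.1 ∈ Icc (0 : ℝ) t := by
    filter_upwards [ae_restrict_prod_fst_mem μ measurableSet_uIoc] with x hx
    rw [uIoc_of_le t.coe_nonneg] at hx
    exact Ioc_subset_Icc_self hx
  have hexp : Integrable (fun x : ℝ × ContPath => exp x.1)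
      ((volume.restrict (uIoc (0 : ℝ) t)).prod μ) :=
    (intervalIntegrable_iff.1 (continuous_exp.intervalIntegrable 0 (t : ℝ))).integrable.comp_fst μ
  have hexpΦ : Integrable (fun x : ℝ × ContPath => exp x.1 * Φ (x.1, ramp x.1.toNNReal 1 x.2))
      ((volume.restrict (uIoc (0 : ℝ) t)).prod μ) :=
    hexp.mul_bdd (hΦ.comp (measurable_fst.prodMk hramp)).aestronglyMeasurable
      (hmem.mono fun x hx => hC _ hx _)
  have hgbmΦ : Integrable (fun x : ℝ × ContPath => gbm x.1 x.2 * Φ x)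
      ((volume.restrict (uIoc (0 : ℝ) t)).prod μ) :=
    (hμ.integrable_gbm_prod t).mul_bdd hΦ.aestronglyMeasurable
      (hmem.mono fun x hx => hC _ hx _)
  rw [← intervalIntegral_integral_swap hexpΦ, ← intervalIntegral_integral_swap hgbmΦ]
  refine intervalIntegral.integral_congr fun r hr => ?_
  rw [uIcc_of_le t.coe_nonneg] at hr
  lift r to ℝ≥0 using hr.1
  simp only [toNNReal_coe, integral_const_mul]
  exact hμ.exp_mul_integral_ramp r (hΦ.comp measurable_prodMk_left)

theorem integral_gbmCoords_by_parts (hμ : IsWienerMeasure μ) {t : ℝ≥0} (ht : 0 < t)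
    {H : ℝ × ℝ → ℝ} (hH : ContDiff ℝ 1 H) (hcpt : HasCompactSupport H) :
    ∫ w, ((gbm t w - 1 - gbmIntegral t w) * H (gbmCoords t w) +
      1 / 2 * fderiv ℝ H (gbmCoords t w) (0, 1)) ∂μ = 0 := by
  have := hμ.isProbabilityMeasure
  have hX := measurable_gbmCoords t
  have hHX : Measurable fun w => H (gbmCoords t w) := hH.continuous.measurable.comp hX
  have hgbm := integrable_mul_comp_gbmCoords t (hμ.integrable_gbm t) hH.continuous hcpt
  have hU := integrable_mul_comp_gbmCoords t (hμ.integrable_gbmIntegral t) hH.continuous hcpt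
  have hI := integrable_mul_comp_gbmCoords t (integrable_const (μ := μ) 1) hH.continuous hcpt
  have hderiv := integrable_mul_comp_gbmCoords t (integrable_const (μ := μ) (1 / 2))
    ((hH.continuous_fderiv one_ne_zero).clm_apply continuous_const) (hcpt.fderiv_apply ℝ (0, 1))
  simp only [one_mul] at hI
  obtain ⟨C, hC⟩ := hcpt.exists_bound_of_continuous hH.continuous
  have hramp : Integrable (fun w => exp t * H (gbmCoords t (ramp t 1 w))) μ :=
    (Integrable.of_bound (hHX.comp (measurable_ramp_const t 1)).aestronglyMeasurable C
      (.of_forall fun w => hC _)).const_mul _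
  obtain ⟨D, hD⟩ := exists_bound_flowDeriv hH hcpt
  have hflow := hμ.integral_exp_mul_ramp t
    (Φ := fun x => flowDeriv H (tailShare t x.1 x.2) (gbmCoords t x.2))
    ((continuous_flowDeriv hH).measurable.comp
      ((measurable_tailShare t).prodMk (hX.comp measurable_snd)))
    fun r hr w => hD _ (tailShare_mem_Icc hr (NNReal.coe_pos.2 ht) w) _
  simp only [← exp_mul_gbmCoords_ramp_sub ht hH, integral_gbm_mul_flowDeriv (NNReal.coe_pos.2 ht)]
    at hflow
  rw [integral_sub hramp hI, integral_const_mul, hμ.exp_mul_integral_ramp t hHX] at hflow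
  calc ∫ w, ((gbm t w - 1 - gbmIntegral t w) * H (gbmCoords t w) +
        1 / 2 * fderiv ℝ H (gbmCoords t w) (0, 1)) ∂μ
      = (∫ w, gbm t w * H (gbmCoords t w) ∂μ) - (∫ w, H (gbmCoords t w) ∂μ) -
          ∫ w, (gbmIntegral t w * H (gbmCoords t w) -
            1 / 2 * fderiv ℝ H (gbmCoords t w) (0, 1)) ∂μ := by
        rw [← integral_sub hgbm hI, ← integral_sub (hgbm.sub' hI) (hU.sub' hderiv)]
        congr with w
        ring
    _ = 0 := sub_eq_zero.2 hflow

end IsWienerMeasure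

end IntegrationByParts

section TranslationInvariance

/-- The weight with respect to which the law of `gbmCoords` is invariant under translations of the
second coordinate. -/
def shiftWeight (x : ℝ × ℝ) : ℝ := x.2 ^ 2 * exp (2 * x.1 / x.2 + 2 * x.2)

lemma shiftWeight_pos {x : ℝ × ℝ} (hx : 0 < x.2) : 0 < shiftWeight x :=
  mul_pos (pow_pos hx 2) (exp_pos _)

lemma measurable_shiftWeight : Measurable shiftWeight := by
  unfold shiftWeight
  fun_prop

lemma contDiffAt_shiftWeight {x : ℝ × ℝ} (hx : 0 < x.2) : ContDiffAt ℝ 1 shiftWeight x :=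
  (contDiffAt_snd.pow 2).mul (((contDiffAt_const.mul contDiffAt_fst).div contDiffAt_snd hx.ne').add
    (contDiffAt_const.mul contDiffAt_snd)).exp

lemma fderiv_shiftWeight_snd {x : ℝ × ℝ} (hx : 0 < x.2) :
    fderiv ℝ shiftWeight x (0, 1) = (2 / x.2 - 2 * x.1 / x.2 ^ 2 + 2) * shiftWeight x := by
  have hline : HasDerivAt (fun q => shiftWeight (x.1, q)) (fderiv ℝ shiftWeight x (0, 1)) x.2 :=
    HasFDerivAt.comp_hasDerivAt (l := shiftWeight) x.2
      ((contDiffAt_shiftWeight hx).differentiableAt one_ne_zero).hasFDerivAt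
      ((hasDerivAt_const x.2 x.1).prodMk (hasDerivAt_id x.2))
  have hexp := (((hasDerivAt_const x.2 (2 * x.1)).fun_div (hasDerivAt_id' x.2) hx.ne').fun_add
    ((hasDerivAt_id' x.2).const_mul 2)).exp
  refine hline.unique ((((hasDerivAt_id' x.2).fun_pow 2).fun_mul hexp).congr_deriv ?_)
  rw [shiftWeight]
  push_cast
  field_simp
  ring

variable {G : ℝ × ℝ → ℝ} {α : ℝ}

lemma contDiff_mul_of_tsupport {E : Type*} [NormedAddCommGroup E] [NormedSpace ℝ E]
    {f g : E → ℝ} (hf : ∀ x ∈ tsupport g, ContDiffAt ℝ 1 f x) (hg : ContDiff ℝ 1 g) :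
    ContDiff ℝ 1 fun x => f x * g x := by
  refine contDiff_iff_contDiffAt.2 fun x => ?_
  by_cases hx : x ∈ tsupport g
  · exact (hf x hx).mul hg.contDiffAt
  · refine (contDiffAt_const (c := 0)).congr_of_eventuallyEq ?_
    filter_upwards [notMem_tsupport_iff_eventuallyEq.1 hx] with y hy
    rw [hy, Pi.zero_apply, mul_zero]

lemma contDiff_shiftWeight_mul (hG : ContDiff ℝ 1 G) (hsupp : tsupport G ⊆ {x | 0 < x.2}) :
    ContDiff ℝ 1 fun x => shiftWeight x * G x :=
  contDiff_mul_of_tsupport (fun _ hx => contDiffAt_shiftWeight (hsupp hx)) hG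

lemma tsupport_comp_add_right_subset (h : tsupport G ⊆ {x | α < x.2}) {s : ℝ} (hs : s ≤ α) :
    tsupport (fun x => G (x + (0, s))) ⊆ {x | 0 < x.2} := fun x hx => by
  have hx' : α < (x + (0, s)).2 :=
    h (tsupport_comp_subset_preimage G (f := fun x => x + (0, s)) (by fun_prop) hx)
  rw [Prod.snd_add] at hx'
  exact pos_of_lt_add_left (hs.trans_lt hx')

lemma comp_add_sub_eq_integral_fderiv (hG : ContDiff ℝ 1 G) (x : ℝ × ℝ) (α : ℝ) :
    G (x + (0, α)) - G x = ∫ s in (0 : ℝ)..α, fderiv ℝ G (x + (0, s)) (0, 1) := by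
  have hline (s : ℝ) : HasDerivAt (fun s => G (x + (0, s))) (fderiv ℝ G (x + (0, s)) (0, 1)) s :=
    (hG.differentiable one_ne_zero _).hasFDerivAt.comp_hasDerivAt s
      (((hasDerivAt_const s (0 : ℝ)).prodMk (hasDerivAt_id s)).const_add x)
  have hcont : Continuous fun s : ℝ => fderiv ℝ G (x + (0, s)) (0, 1) :=
    ((hG.continuous_fderiv one_ne_zero).comp (by fun_prop)).clm_apply continuous_const
  rw [intervalIntegral.integral_eq_sub_of_hasDerivAt (fun s _ => hline s)
    (hcont.intervalIntegrable _ _), ← Prod.zero_eq_mk, add_zero]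

lemma exists_bound_shiftWeight_mul_fderiv (hG : ContDiff ℝ 1 G) (hcpt : HasCompactSupport G)
    (hsupp : tsupport G ⊆ {x | α < x.2}) :
    ∃ C, ∀ s ∈ Icc 0 α, ∀ x, ‖shiftWeight x * fderiv ℝ G (x + (0, s)) (0, 1)‖ ≤ C := by
  have hpos (z : (ℝ × ℝ) × ℝ) (hz : z ∈ tsupport G ×ˢ Icc 0 α) : 0 < (z.1 - (0, z.2)).2 :=
    sub_pos.2 (hz.2.2.trans_lt (hsupp hz.1))
  have hcont : ContinuousOn (fun z : (ℝ × ℝ) × ℝ =>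
      shiftWeight (z.1 - (0, z.2)) * fderiv ℝ G z.1 (0, 1)) (tsupport G ×ˢ Icc 0 α) := by
    refine ContinuousOn.mul (fun z hz => ?_) (Continuous.continuousOn
      (((hG.continuous_fderiv one_ne_zero).comp continuous_fst).clm_apply continuous_const))
    exact (ContinuousAt.comp (f := fun z : (ℝ × ℝ) × ℝ => z.1 - (0, z.2))
      (contDiffAt_shiftWeight (hpos z hz)).continuousAt (by fun_prop)).continuousWithinAt
  obtain ⟨C, hC⟩ := (hcpt.isCompact.prod isCompact_Icc).exists_bound_of_continuousOn hcont
  refine ⟨max C 0, fun s hs x => ?_⟩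
  by_cases hx : x + (0, s) ∈ tsupport G
  · have := hC (x + (0, s), s) ⟨hx, hs⟩
    rw [add_sub_cancel_right] at this
    exact this.trans (le_max_left _ _)
  · rw [image_eq_zero_of_notMem_tsupport (f := fderiv ℝ G)
      fun h => hx (tsupport_fderiv_subset ℝ h)]
    simp

variable {μ : Measure ContPath}

lemma integrable_shiftWeight_mul_comp_add [IsFiniteMeasure μ] (t : ℝ) (hG : ContDiff ℝ 1 G)
    (hcpt : HasCompactSupport G) (hsupp : tsupport G ⊆ {x | α < x.2}) {s : ℝ} (hs : s ≤ α) :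
    Integrable (fun w => shiftWeight (gbmCoords t w) * G (gbmCoords t w + (0, s))) μ := by
  simpa only [one_mul] using integrable_mul_comp_gbmCoords t (integrable_const (μ := μ) 1)
    (contDiff_shiftWeight_mul (G := fun x => G (x + (0, s)))
      (hG.comp (contDiff_id.add contDiff_const))
      (tsupport_comp_add_right_subset hsupp hs)).continuous
    (hcpt.comp_homeomorph (Homeomorph.addRight (0, s))).mul_left

namespace IsWienerMeasure

lemma integral_shiftWeight_mul_fderiv_eq_zero (hμ : IsWienerMeasure μ) {t : ℝ≥0} (ht : 0 < t)
    (hG : ContDiff ℝ 1 G) (hcpt : HasCompactSupport G) (hsupp : tsupport G ⊆ {x | 0 < x.2}) :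
    ∫ w, shiftWeight (gbmCoords t w) * fderiv ℝ G (gbmCoords t w) (0, 1) ∂μ = 0 := by
  have hparts := hμ.integral_gbmCoords_by_parts ht (contDiff_shiftWeight_mul hG hsupp)
    hcpt.mul_left
  have hpoint (w : ContPath) : (gbm t w - 1 - gbmIntegral t w) *
        (shiftWeight (gbmCoords t w) * G (gbmCoords t w)) +
      1 / 2 * fderiv ℝ (fun x => shiftWeight x * G x) (gbmCoords t w) (0, 1) =
      1 / 2 * (shiftWeight (gbmCoords t w) * fderiv ℝ G (gbmCoords t w) (0, 1)) := by
    have hU := gbmIntegral_pos (NNReal.coe_pos.2 ht) w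
    have hq : 0 < (gbmCoords t w).2 := inv_pos.2 hU
    have hlog : 2 / (gbmCoords t w).2 - 2 * (gbmCoords t w).1 / (gbmCoords t w).2 ^ 2 + 2 =
        2 * (gbmIntegral t w - gbm t w + 1) := by
      simp only [gbmCoords, invSqCoords]
      field_simp
    rw [fderiv_fun_mul ((contDiffAt_shiftWeight hq).differentiableAt one_ne_zero)
      (hG.differentiable one_ne_zero _)]
    simp only [add_apply, smul_apply, smul_eq_mul,
      fderiv_shiftWeight_snd hq, hlog]
    ring
  rw [integral_congr_ae (.of_forall hpoint), integral_const_mul] at hparts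
  exact (mul_eq_zero.1 hparts).resolve_left one_half_pos.ne'

lemma integral_shiftWeight_mul_comp_add_sub (hμ : IsWienerMeasure μ) {t : ℝ≥0} (ht : 0 < t)
    (hα : 0 ≤ α) (hG : ContDiff ℝ 1 G) (hcpt : HasCompactSupport G)
    (hsupp : tsupport G ⊆ {x | α < x.2}) :
    ∫ w, shiftWeight (gbmCoords t w) * (G (gbmCoords t w + (0, α)) - G (gbmCoords t w)) ∂μ = 0 := by
  have := hμ.isProbabilityMeasure
  have hX := measurable_gbmCoords t
  have hmeas : Measurable fun x : ℝ × ContPath => shiftWeight (gbmCoords t x.2) *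
      fderiv ℝ G (gbmCoords t x.2 + (0, x.1)) (0, 1) :=
    (measurable_shiftWeight.comp (hX.comp measurable_snd)).mul
      (((hG.continuous_fderiv one_ne_zero).clm_apply continuous_const).measurable.comp
        ((hX.comp measurable_snd).add (measurable_const.prodMk measurable_fst)))
  obtain ⟨C, hC⟩ := exists_bound_shiftWeight_mul_fderiv hG hcpt hsupp
  have : IsFiniteMeasure (volume.restrict (uIoc 0 α)) := isFiniteMeasure_restrict_Ioc _ _
  have hint : Integrable (fun x : ℝ × ContPath => shiftWeight (gbmCoords t x.2) *
      fderiv ℝ G (gbmCoords t x.2 + (0, x.1)) (0, 1))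
      ((volume.restrict (uIoc (0 : ℝ) α)).prod μ) := by
    refine .of_bound hmeas.aestronglyMeasurable C ?_
    filter_upwards [ae_restrict_prod_fst_mem μ measurableSet_uIoc] with x hx
    rw [uIoc_of_le hα] at hx
    exact hC _ (Ioc_subset_Icc_self hx) _
  simp only [comp_add_sub_eq_integral_fderiv hG, ← intervalIntegral.integral_const_mul]
  rw [← intervalIntegral_integral_swap hint]
  refine intervalIntegral.integral_zero_ae (.of_forall fun s hs => ?_)
  rw [uIoc_of_le hα] at hs
  simpa only [fderiv_comp_add_right] using hμ.integral_shiftWeight_mul_fderiv_eq_zero ht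
    (G := fun x => G (x + (0, s))) (hG.comp (contDiff_id.add contDiff_const))
    (hcpt.comp_homeomorph (Homeomorph.addRight (0, s))) (tsupport_comp_add_right_subset hsupp hs.2)

theorem integral_shiftWeight_mul_comp_add (hμ : IsWienerMeasure μ) {t : ℝ≥0} (ht : 0 < t)
    (hα : 0 ≤ α) (hG : ContDiff ℝ 1 G) (hcpt : HasCompactSupport G)
    (hsupp : tsupport G ⊆ {x | α < x.2}) :
    ∫ w, shiftWeight (gbmCoords t w) * G (gbmCoords t w + (0, α)) ∂μ =
      ∫ w, shiftWeight (gbmCoords t w) * G (gbmCoords t w) ∂μ := by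
  have := hμ.isProbabilityMeasure
  have hint := integrable_shiftWeight_mul_comp_add (μ := μ) t hG hcpt hsupp le_rfl
  have hint0 := integrable_shiftWeight_mul_comp_add (μ := μ) t hG hcpt hsupp hα
  simp only [← Prod.zero_eq_mk, add_zero] at hint0
  rw [← sub_eq_zero, ← integral_sub hint hint0]
  simpa only [mul_sub] using hμ.integral_shiftWeight_mul_comp_add_sub ht hα hG hcpt hsupp

end IsWienerMeasure

end TranslationInvariance

section ExhaustingCutoffs

/-- Compactly supported smooth functions on the plane that increase, as `n → ∞`, to the indicator
of the half-plane `α < q`. -/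
def halfPlaneCutoff (α : ℝ) (n : ℕ) (x : ℝ × ℝ) : ℝ :=
  smoothTransition (n - (x.1 ^ 2 + x.2 ^ 2)) * smoothTransition (n * (x.2 - α) - 1)

variable {α : ℝ} {n : ℕ} {x : ℝ × ℝ}

lemma halfPlaneCutoff_nonneg : 0 ≤ halfPlaneCutoff α n x :=
  mul_nonneg (smoothTransition.nonneg _) (smoothTransition.nonneg _)

lemma contDiff_halfPlaneCutoff : ContDiff ℝ 1 (halfPlaneCutoff α n) :=
  (smoothTransition.contDiff.comp (by fun_prop)).mul (smoothTransition.contDiff.comp (by fun_prop))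

lemma sq_add_sq_lt_of_halfPlaneCutoff_ne_zero (h : halfPlaneCutoff α n x ≠ 0) :
    x.1 ^ 2 + x.2 ^ 2 < n := by
  by_contra! hle
  exact h (mul_eq_zero_of_left (smoothTransition.zero_of_nonpos (sub_nonpos.2 hle)) _)

lemma one_lt_of_halfPlaneCutoff_ne_zero (h : halfPlaneCutoff α n x ≠ 0) :
    1 < n * (x.2 - α) := by
  by_contra! hle
  exact h (mul_eq_zero_of_right _ (smoothTransition.zero_of_nonpos (sub_nonpos.2 hle)))

lemma halfPlaneCutoff_of_le (hx : x.2 ≤ α) : halfPlaneCutoff α n x = 0 := by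
  by_contra h
  exact absurd (one_lt_of_halfPlaneCutoff_ne_zero h) (not_lt.2 ((mul_nonpos_of_nonneg_of_nonpos
    n.cast_nonneg (sub_nonpos.2 hx)).trans zero_le_one))

lemma hasCompactSupport_halfPlaneCutoff : HasCompactSupport (halfPlaneCutoff α n) := by
  refine .of_support_subset_isCompact (isCompact_closedBall 0 √n) fun x hx => ?_
  have hsq := sq_add_sq_lt_of_halfPlaneCutoff_ne_zero hx
  rw [mem_closedBall_zero_iff, Prod.norm_def, norm_eq_abs, norm_eq_abs]
  exact max_le (abs_le_sqrt (by linarith [sq_nonneg x.2]))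
    (abs_le_sqrt (by linarith [sq_nonneg x.1]))

lemma tsupport_halfPlaneCutoff_subset : tsupport (halfPlaneCutoff α n) ⊆ {x | α < x.2} := by
  have hclosed : IsClosed {x : ℝ × ℝ | 1 ≤ n * (x.2 - α)} :=
    isClosed_le continuous_const (by fun_prop)
  refine (closure_minimal (fun x hx => (one_lt_of_halfPlaneCutoff_ne_zero hx).le) hclosed).trans
    fun x (hx : 1 ≤ n * (x.2 - α)) => ?_
  exact sub_pos.1 (pos_of_mul_pos_right (zero_lt_one.trans_le hx) n.cast_nonneg)

lemma monotone_halfPlaneCutoff (α : ℝ) (x : ℝ × ℝ) : Monotone fun n => halfPlaneCutoff α n x := by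
  intro m n hmn
  have hmn' : (m : ℝ) ≤ n := Nat.cast_le.2 hmn
  rcases le_total x.2 α with hx | hx
  · simp only [halfPlaneCutoff_of_le hx, le_refl]
  · refine mul_le_mul (smoothTransition.monotone ?_) (smoothTransition.monotone ?_)
      (smoothTransition.nonneg _) (smoothTransition.nonneg _)
    · linarith
    · nlinarith

lemma tendsto_halfPlaneCutoff (α : ℝ) (x : ℝ × ℝ) :
    Filter.Tendsto (fun n => halfPlaneCutoff α n x) Filter.atTop
      (𝓝 ({y : ℝ × ℝ | α < y.2}.indicator 1 x)) := by
  by_cases hx : α < x.2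
  · refine tendsto_const_nhds.congr' ?_
    filter_upwards [tendsto_natCast_atTop_atTop.eventually_ge_atTop (x.1 ^ 2 + x.2 ^ 2 + 1),
      tendsto_natCast_atTop_atTop.eventually_ge_atTop (2 / (x.2 - α))] with n hball hhalf
    rw [div_le_iff₀ (sub_pos.2 hx)] at hhalf
    rw [indicator_of_mem (by exact hx), Pi.one_apply, halfPlaneCutoff,
      smoothTransition.one_of_one_le (by linarith), smoothTransition.one_of_one_le (by linarith),
      one_mul]
  · rw [indicator_of_notMem (by exact hx)]
    simp only [halfPlaneCutoff_of_le (not_lt.1 hx), tendsto_const_nhds]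

lemma tendsto_lintegral_mul_halfPlaneCutoff {E : Type*} [MeasurableSpace E] {ν : Measure E}
    {Z : E → ℝ} (hZ : Measurable Z) (hZ0 : ∀ w, 0 ≤ Z w) {Y : E → ℝ × ℝ} (hY : Measurable Y)
    (α : ℝ) :
    Filter.Tendsto (fun n => ∫⁻ w, ENNReal.ofReal (Z w * halfPlaneCutoff α n (Y w)) ∂ν)
      Filter.atTop (𝓝 (∫⁻ w in {w | α < (Y w).2}, ENNReal.ofReal (Z w) ∂ν)) := by
  have hcut (n : ℕ) : Measurable fun w => ENNReal.ofReal (Z w * halfPlaneCutoff α n (Y w)) :=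
    (hZ.mul (contDiff_halfPlaneCutoff.continuous.measurable.comp hY)).ennreal_ofReal
  rw [← lintegral_indicator (measurableSet_lt measurable_const hY.snd)]
  refine lintegral_tendsto_of_tendsto_of_monotone (fun n => (hcut n).aemeasurable)
    (.of_forall fun w m n hmn => ?_) (.of_forall fun w => ?_)
  · exact ENNReal.ofReal_le_ofReal
      (mul_le_mul_of_nonneg_left (monotone_halfPlaneCutoff α _ hmn) (hZ0 w))
  · convert ENNReal.tendsto_ofReal ((tendsto_halfPlaneCutoff α (Y w)).const_mul (Z w)) using 2
    by_cases hw : α < (Y w).2 <;> simp [hw]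

end ExhaustingCutoffs

section LawOfTheIntegral

variable {μ : Measure ContPath}

lemma gbmCoords_snd_pos {t : ℝ} (ht : 0 < t) (w : ContPath) : 0 < (gbmCoords t w).2 :=
  inv_pos.2 (gbmIntegral_pos ht w)

lemma strictMono_gbmIntegral_ramp {t : ℝ≥0} (ht : 0 < t) (w : ContPath) :
    StrictMono fun c => gbmIntegral t (ramp t c w) := by
  intro c d hcd
  have hcont (c : ℝ) := (continuous_gbm (ramp t c w)).continuousOn (s := Icc (0 : ℝ) t)
  have hle (s : ℝ) : gbm s (ramp t c w) ≤ gbm s (ramp t d w) := by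
    simp only [gbm, ramp]
    gcongr
  refine intervalIntegral.integral_lt_integral_of_continuousOn_of_le_of_exists_lt
    (NNReal.coe_pos.2 ht) (hcont c) (hcont d) (fun s _ => hle s)
    ⟨t, right_mem_Icc.2 t.coe_nonneg, ?_⟩
  simp only [gbm, ramp, toNNReal_coe, min_self]
  gcongr

namespace IsWienerMeasure

lemma lintegral_shiftWeight_div_mul_halfPlaneCutoff (hμ : IsWienerMeasure μ) {t : ℝ≥0}
    (ht : 0 < t) {α : ℝ} (hα : 0 ≤ α) (n : ℕ) :
    ∫⁻ w, ENNReal.ofReal (shiftWeight (gbmCoords t w) / shiftWeight (gbmCoords t w + (0, α)) *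
        halfPlaneCutoff α n (gbmCoords t w + (0, α))) ∂μ =
      ∫⁻ w, ENNReal.ofReal (halfPlaneCutoff α n (gbmCoords t w)) ∂μ := by
  have := hμ.isProbabilityMeasure
  have hpos (w : ContPath) : 0 < (gbmCoords t w).2 := gbmCoords_snd_pos (NNReal.coe_pos.2 ht) w
  have hW0 (w : ContPath) := (shiftWeight_pos (hpos w)).ne'
  set G : ℝ × ℝ → ℝ := fun x => (shiftWeight x)⁻¹ * halfPlaneCutoff α n x with hGdef
  have hG : ContDiff ℝ 1 G := contDiff_mul_of_tsupport (fun x hx => by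
      have hx0 : 0 < x.2 := hα.trans_lt (tsupport_halfPlaneCutoff_subset hx)
      exact (contDiffAt_shiftWeight hx0).inv (shiftWeight_pos hx0).ne') contDiff_halfPlaneCutoff
  have hcpt : HasCompactSupport G := hasCompactSupport_halfPlaneCutoff.mul_left
  have hsupp : tsupport G ⊆ {x | α < x.2} :=
    tsupport_mul_subset_right.trans tsupport_halfPlaneCutoff_subset
  have hint := integrable_shiftWeight_mul_comp_add (μ := μ) t hG hcpt hsupp le_rfl
  have hint0 := integrable_shiftWeight_mul_comp_add (μ := μ) t hG hcpt hsupp hα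
  have hinv := hμ.integral_shiftWeight_mul_comp_add ht hα hG hcpt hsupp
  simp only [hGdef, ← Prod.zero_eq_mk, add_zero, ← mul_assoc, mul_inv_cancel₀ (hW0 _), one_mul,
    ← div_eq_mul_inv] at hinv hint hint0
  rw [← ofReal_integral_eq_lintegral_ofReal hint, hinv,
    ofReal_integral_eq_lintegral_ofReal hint0 (.of_forall fun w => halfPlaneCutoff_nonneg)]
  refine .of_forall fun w => mul_nonneg (div_nonneg (shiftWeight_pos (hpos w)).le
    (shiftWeight_pos ?_).le) halfPlaneCutoff_nonneg
  exact add_pos_of_pos_of_nonneg (hpos w) hα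

theorem integral_shiftWeight_div (hμ : IsWienerMeasure μ) {t : ℝ≥0} (ht : 0 < t) {α : ℝ}
    (hα : 0 ≤ α) :
    ∫ w, shiftWeight (gbmCoords t w) / shiftWeight (gbmCoords t w + (0, α)) ∂μ =
      μ.real {w | α < (gbmCoords t w).2} := by
  have hpos (w : ContPath) : 0 < (gbmCoords t w).2 := gbmCoords_snd_pos (NNReal.coe_pos.2 ht) w
  have hpos' (w : ContPath) : 0 < (gbmCoords t w + (0, α)).2 :=
    add_pos_of_pos_of_nonneg (hpos w) hα
  have hratio (w : ContPath) :
      0 ≤ shiftWeight (gbmCoords t w) / shiftWeight (gbmCoords t w + (0, α)) :=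
    div_nonneg (shiftWeight_pos (hpos w)).le (shiftWeight_pos (hpos' w)).le
  have hX := measurable_gbmCoords t
  have hX' : Measurable fun w => gbmCoords t w + (0, α) := hX.add_const _
  have hmeas := (measurable_shiftWeight.comp hX).div (measurable_shiftWeight.comp hX')
  have hlhs := tendsto_lintegral_mul_halfPlaneCutoff (ν := μ) hmeas hratio hX' α
  have hrhs := tendsto_lintegral_mul_halfPlaneCutoff (ν := μ) measurable_one
    (fun _ => zero_le_one) hX α
  have huniv : {w | α < (gbmCoords t w + (0, α)).2} = univ :=
    eq_univ_of_forall fun w => lt_add_of_pos_left α (hpos w)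
  simp only [Pi.one_apply, one_mul, ← hμ.lintegral_shiftWeight_div_mul_halfPlaneCutoff ht hα,
    ENNReal.ofReal_one, setLIntegral_one] at hrhs
  rw [huniv, Measure.restrict_univ] at hlhs
  rw [integral_eq_lintegral_of_nonneg_ae (.of_forall hratio) hmeas.aestronglyMeasurable,
    measureReal_def, ← tendsto_nhds_unique hlhs hrhs]
  rfl

lemma measure_gbmIntegral_eq (hμ : IsWienerMeasure μ) {t : ℝ≥0} (ht : 0 < t) (a : ℝ) :
    μ {w | gbmIntegral t w = a} = 0 := by
  have hset : MeasurableSet {w : ContPath | gbmIntegral t w = a} :=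
    measurable_gbmIntegral.comp measurable_prodMk_left (measurableSet_singleton a)
  have := nullSingletonClass_gaussianReal (μ := 0) ht.ne'
  rw [← lintegral_indicator_one hset, hμ.lintegral_eval_self t
    (F := fun x => {w : ContPath | gbmIntegral t w = a}.indicator 1 x.2)
    ((measurable_one.indicator hset).comp measurable_snd)]
  refine lintegral_eq_zero_of_ae_eq_zero (.of_forall fun z => ?_)
  have hlevel : {x : ℝ | gbmIntegral t (ramp t (x / t) z) = a}.Subsingleton := fun x hx y hy =>
    (div_left_inj' (NNReal.coe_ne_zero.2 ht.ne')).1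
      ((strictMono_gbmIntegral_ramp ht z).injective (hx.trans hy.symm))
  refine lintegral_eq_zero_of_ae_eq_zero ?_
  filter_upwards [compl_mem_ae_iff.2 (hlevel.measure_zero (gaussianReal 0 t))] with x hx
  rw [indicator_of_notMem (by exact hx), Pi.zero_apply]

end IsWienerMeasure

end LawOfTheIntegral

section ExponentialFunctional

lemma shiftWeight_div_shiftWeight_invSqCoords {a u : ℝ} (ha : 0 < a) (hu : 0 < u) (x : ℝ) :
    shiftWeight (invSqCoords x u) / shiftWeight (invSqCoords x u + (0, a⁻¹)) =
      a ^ 2 * ((a + u)⁻¹ ^ 2 * exp (2 * x / (a + u) - 2 / a)) := by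
  have hq : u⁻¹ + a⁻¹ = (a + u) / (a * u) := by field_simp
  have hexp : 2 * x / (a + u) - 2 / a =
      2 * (x / u ^ 2) / u⁻¹ + 2 * u⁻¹ -
        (2 * (x / u ^ 2) / ((a + u) / (a * u)) + 2 * ((a + u) / (a * u))) := by
    field_simp
    ring
  simp only [shiftWeight, invSqCoords, Prod.mk_add_mk, add_zero, hq]
  rw [hexp, exp_sub]
  field_simp

theorem IsWienerMeasure.integral_inv_sq_mul_exp_gbm {μ : Measure ContPath}
    (hμ : IsWienerMeasure μ) {t : ℝ≥0} (ht : 0 < t) {a : ℝ} (ha : 0 < a) :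
    a ^ 2 * ∫ w, (a + gbmIntegral t w)⁻¹ ^ 2 *
        exp (2 * gbm t w / (a + gbmIntegral t w) - 2 / a) ∂μ =
      μ.real {w | gbmIntegral t w ≤ a} := by
  have hU (w : ContPath) : 0 < gbmIntegral t w := gbmIntegral_pos (NNReal.coe_pos.2 ht) w
  have hlt : {w | a⁻¹ < (gbmCoords t w).2} = {w | gbmIntegral t w < a} :=
    ext fun w => inv_lt_inv₀ ha (hU w)
  have hle : {w : ContPath | gbmIntegral t w < a} =ᵐ[μ] {w | gbmIntegral t w ≤ a} := by
    filter_upwards [compl_mem_ae_iff.2 (hμ.measure_gbmIntegral_eq ht a)] with w hw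
    exact propext (lt_iff_le_and_ne.trans (and_iff_left hw))
  rw [← measureReal_congr hle, ← hlt, ← hμ.integral_shiftWeight_div ht (inv_nonneg.2 ha.le),
    ← integral_const_mul]
  exact integral_congr_ae (.of_forall fun w =>
    (shiftWeight_div_shiftWeight_invSqCoords ha (hU w) _).symm)

end ExponentialFunctional

section CanonicalProcess

/-- The coordinate process on `ContPath`, indexed by `ℝ` like the Brownian motions of
`IsBrownianMotion` (and constant at negative times). -/
def coordProcess (s : ℝ) (w : ContPath) : ℝ := w.1 s.toNNReal

lemma measurable_M_coordProcess (t : ℝ) : Measurable (M coordProcess t) := by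
  unfold M coordProcess
  fun_prop

lemma measurable_A_coordProcess (t : ℝ) : Measurable (A coordProcess t) := by
  have hcont (w : ContPath) : Continuous fun s => M coordProcess s w := by
    have := w.2
    unfold M coordProcess
    fun_prop
  have hM : StronglyMeasurable fun x : ContPath × ℝ => M coordProcess x.2 x.1 :=
    ((measurable_uncurry_of_continuous_of_measurable hcont measurable_M_coordProcess).comp
      measurable_swap).stronglyMeasurable
  exact hM.integral_prod_right.measurable.sub hM.integral_prod_right.measurable

lemma M_coordProcess_ramp (t : ℝ≥0) (w : ContPath) :
    M coordProcess t (ramp t 1 w) = gbm t w := by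
  simp only [M, coordProcess, gbm, ramp, toNNReal_coe, min_self]
  ring_nf

lemma A_coordProcess_ramp (t : ℝ≥0) (w : ContPath) :
    A coordProcess t (ramp t 1 w) = gbmIntegral t w := by
  refine intervalIntegral.integral_congr fun s hs => ?_
  rw [uIcc_of_le t.coe_nonneg] at hs
  lift s to ℝ≥0 using hs.1
  have hst : s ≤ t := hs.2
  simp only [coordProcess, gbm, ramp, toNNReal_coe, min_eq_left hst]
  ring_nf

lemma IsWienerMeasure.integral_M_mul {μ : Measure ContPath} (hμ : IsWienerMeasure μ) (t : ℝ≥0)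
    {G : ℝ × ℝ → ℝ} (hG : Measurable G) :
    ∫ w, M coordProcess t w * G (M coordProcess t w, A coordProcess t w) ∂μ =
      ∫ w, G (gbm t w, gbmIntegral t w) ∂μ := by
  have h := hμ.integral_exp_mul t (fun w => G (M coordProcess t w, A coordProcess t w))
    (hG.comp ((measurable_M_coordProcess t).prodMk (measurable_A_coordProcess t)))
  simp only [M_coordProcess_ramp, A_coordProcess_ramp] at h
  rw [← h]
  simp only [M, coordProcess, toNNReal_coe]

end CanonicalProcess

namespace IsBrownianMotion

variable {P B}

/-- The path of `B` over nonnegative times. -/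
def path (hB : IsBrownianMotion P B) (ω : Ω) : ContPath :=
  ⟨fun s => B s ω, (hB.continuous_paths ω).comp NNReal.continuous_coe⟩

lemma measurable_path (hB : IsBrownianMotion P B) : Measurable hB.path :=
  (measurable_pi_lambda _ fun s : ℝ≥0 => hB.measurable s).subtype_mk

lemma isPreBrownianReal (hB : IsBrownianMotion P B) :
    IsPreBrownianReal (fun (s : ℝ≥0) ω => B s ω) P := by
  refine HasIndepIncrements.isPreBrownianReal_of_hasLaw (fun s => ⟨?_, ?_⟩) ?_
  · exact (hB.measurable s).aemeasurable
  · simpa only [hB.start, sub_zero, toNNReal_coe] using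
      hB.gaussian_increments 0 s le_rfl s.coe_nonneg
  · exact hasIndepIncrements_iff_nat.2 fun τ hτ =>
      hB.indep_increments (fun i => τ i) (fun i j hij => hτ hij) (τ 0).coe_nonneg

lemma isWienerMeasure_map_path (hB : IsBrownianMotion P B) :
    IsWienerMeasure (P.map hB.path) := by
  refine ⟨⟨fun I => ⟨by fun_prop, ?_⟩⟩⟩
  rw [Measure.map_map (by fun_prop) hB.measurable_path]
  exact (hB.isPreBrownianReal.hasLaw I).map_eq

lemma M_path (hB : IsBrownianMotion P B) (t : ℝ≥0) (ω : Ω) :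
    M coordProcess t (hB.path ω) = M B t ω := by
  simp only [M, coordProcess, path, toNNReal_coe]

lemma A_path (hB : IsBrownianMotion P B) (t : ℝ≥0) (ω : Ω) :
    A coordProcess t (hB.path ω) = A B t ω := by
  refine intervalIntegral.integral_congr fun s hs => ?_
  rw [uIcc_of_le t.coe_nonneg] at hs
  simp only [coordProcess, path, coe_toNNReal s hs.1]

lemma gbmIntegral_path (hB : IsBrownianMotion P B) (t : ℝ≥0) (ω : Ω) :
    gbmIntegral t (hB.path ω) = Adrift B 1 t ω := by
  refine intervalIntegral.integral_congr fun s hs => ?_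
  rw [uIcc_of_le t.coe_nonneg] at hs
  simp only [gbm, path, coe_toNNReal s hs.1]
  ring_nf

theorem integral_M_mul (hB : IsBrownianMotion P B) (t : ℝ≥0) {G : ℝ × ℝ → ℝ} (hG : Measurable G) :
    ∫ ω, M B t ω * G (M B t ω, A B t ω) ∂P =
      ∫ w, G (gbm t w, gbmIntegral t w) ∂P.map hB.path := by
  have hM := measurable_M_coordProcess t
  have hMG : Measurable fun w => M coordProcess t w * G (M coordProcess t w, A coordProcess t w) :=
    hM.mul (hG.comp (hM.prodMk (measurable_A_coordProcess t)))
  rw [← hB.isWienerMeasure_map_path.integral_M_mul t hG,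
    integral_map hB.measurable_path.aemeasurable hMG.aestronglyMeasurable]
  simp only [hB.M_path, hB.A_path]

lemma map_path_real_gbmIntegral_le (hB : IsBrownianMotion P B) (t : ℝ≥0) (a : ℝ) :
    (P.map hB.path).real {w | gbmIntegral t w ≤ a} = (P {ω | Adrift B 1 t ω ≤ a}).toReal := by
  have hU : Measurable fun w => gbmIntegral t w :=
    measurable_gbmIntegral.comp measurable_prodMk_left
  rw [map_measureReal_apply hB.measurable_path (measurableSet_le hU measurable_const),
    measureReal_def]
  simp only [preimage_ofPred_eq, hB.gbmIntegral_path]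

end IsBrownianMotion

theorem second_term_eq (hB : IsBrownianMotion P B) (t a : ℝ) (ht : 0 < t) (ha : 0 < a) :
    1 / 2 * Real.exp (-2 / a) *
      ∫ ω, M B t ω * (a / 2 + A B t ω / 2)⁻¹ ^ 2 *
            Real.exp (M B t ω / (a / 2 + A B t ω / 2)) ∂P
      = 2 / a ^ 2 * (P {ω | Adrift B 1 t ω ≤ a}).toReal := by
  lift t to ℝ≥0 using ht.le
  have hrescale (x u : ℝ) : x * (a / 2 + u / 2)⁻¹ ^ 2 * exp (x / (a / 2 + u / 2)) =
      4 * exp (2 / a) * (x * ((a + u)⁻¹ ^ 2 * exp (2 * x / (a + u) - 2 / a))) := by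
    have hexp : x / (a / 2 + u / 2) = 2 / a + (2 * x / (a + u) - 2 / a) := by
      rw [← add_div, div_div_eq_mul_div]
      ring
    rw [hexp, exp_add, ← add_div, inv_div]
    ring
  have hgirsanov := hB.integral_M_mul t
    (G := fun y => (a + y.2)⁻¹ ^ 2 * exp (2 * y.1 / (a + y.2) - 2 / a)) (by fun_prop)
  simp only [hrescale, integral_const_mul, hgirsanov]
  rw [← hB.map_path_real_gbmIntegral_le,
    ← hB.isWienerMeasure_map_path.integral_inv_sq_mul_exp_gbm (NNReal.coe_pos.1 ht) ha,
    neg_div, exp_neg]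
  field_simp
  norm_num
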